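/- Let M be a finite abelian group, f : M → M an additive endomorphism, and M_i := ker(f^i) for i ≥ 0. Then for every i ≥ 0 the map induced by f^i gives an injective group homomorphism M_{i+1}/M_i → M_1 = ker f; consequently the sequence i ↦ Nat.card(M_{i+1}/M_i) is antitone (decreasing) in i, and each cardinality Nat.card(M_{i+1}/M_i) divides Nat.card(M_1). -/

import Mathlib

/-!
The map `f ^ i` sends `M_{i+1} = (f ^ i)⁻¹(ker f)` to `ker f` with kernel `M_i`, so it identifies
`M_{i+1}/M_i` with `ker f ∩ range (f ^ i)`. These subgroups of `ker f` shrink as `i` grows.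
-/

section ComapQuotient

variable {A B : Type*} [AddGroup A] [AddGroup B] (g : A →+ B) (K : AddSubgroup B)

theorem ker_addSubgroupComap :
    (g.addSubgroupComap K).ker = g.ker.addSubgroupOf (K.comap g) := by
  ext x
  exact Subtype.ext_iff

theorem range_addSubgroupComap :
    (g.addSubgroupComap K).range = g.range.addSubgroupOf K := by
  ext y
  constructor
  · rintro ⟨x, rfl⟩
    exact ⟨x, rfl⟩
  · rintro ⟨a, ha : g a = y⟩
    have ha_mem : g a ∈ K := ha ▸ y.2
    exact ⟨⟨a, ha_mem⟩, Subtype.ext ha⟩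

/-- The homomorphism `g⁻¹(K) / ker g → K` induced by `g`. The kernel is viewed as a subgroup of
`g⁻¹(K)`. -/
def comapQuotientKerHom : (K.comap g ⧸ g.ker.addSubgroupOf (K.comap g)) →+ K :=
  QuotientAddGroup.lift _ (g.addSubgroupComap K) (ker_addSubgroupComap g K).ge

theorem comapQuotientKerHom_injective : Function.Injective (comapQuotientKerHom g K) :=
  (QuotientAddGroup.injective_lift_iff _ _ _).2 (ker_addSubgroupComap g K).symm

theorem card_comap_quotient_ker :
    Nat.card (K.comap g ⧸ g.ker.addSubgroupOf (K.comap g)) =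
      Nat.card (g.range.addSubgroupOf K) := by
  rw [← ker_addSubgroupComap, ← range_addSubgroupComap]
  exact Nat.card_congr (QuotientAddGroup.quotientKerEquivRange _).toEquiv

end ComapQuotient

section PowersOfEnd

variable {M : Type*} [AddGroup M] (f : AddMonoid.End M)

theorem ker_pow_succ_eq_comap (i : ℕ) :
    AddMonoidHom.ker (f ^ (i + 1)) = (AddMonoidHom.ker f).comap (f ^ i) := by
  rw [pow_succ']
  exact (AddMonoidHom.comap_ker f (f ^ i)).symm

theorem antitone_range_pow : Antitone fun i : ℕ => AddMonoidHom.range (f ^ i) := by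
  refine antitone_nat_of_succ_le fun i => ?_
  rw [pow_succ]
  rintro _ ⟨x, rfl⟩
  exact ⟨f x, rfl⟩

theorem card_ker_pow_succ_quotient (i : ℕ) :
    Nat.card (AddMonoidHom.ker (f ^ (i + 1)) ⧸
      (AddMonoidHom.ker (f ^ i)).addSubgroupOf (AddMonoidHom.ker (f ^ (i + 1)))) =
    Nat.card ((AddMonoidHom.range (f ^ i)).addSubgroupOf (AddMonoidHom.ker f)) := by
  rw [ker_pow_succ_eq_comap]
  exact card_comap_quotient_ker (f ^ i) (AddMonoidHom.ker f)

end PowersOfEnd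

theorem stmt2_general {M : Type*} [AddGroup M] (f : AddMonoid.End M)
    [Finite (AddMonoidHom.ker f)] :
    (∀ i : ℕ, ∃ φ : (AddMonoidHom.ker (f ^ (i + 1)) ⧸
          (AddMonoidHom.ker (f ^ i)).addSubgroupOf (AddMonoidHom.ker (f ^ (i + 1)))) →+
        AddMonoidHom.ker f,
      Function.Injective φ ∧
      ∀ (x : AddMonoidHom.ker (f ^ (i + 1))) (h : (f ^ i) (x : M) ∈ AddMonoidHom.ker f),
        φ (QuotientAddGroup.mk x) = ⟨(f ^ i) (x : M), h⟩) ∧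
    Antitone (fun i : ℕ => Nat.card (AddMonoidHom.ker (f ^ (i + 1)) ⧸
      (AddMonoidHom.ker (f ^ i)).addSubgroupOf (AddMonoidHom.ker (f ^ (i + 1))))) ∧
    (∀ i : ℕ, Nat.card (AddMonoidHom.ker (f ^ (i + 1)) ⧸
        (AddMonoidHom.ker (f ^ i)).addSubgroupOf (AddMonoidHom.ker (f ^ (i + 1)))) ∣
      Nat.card (AddMonoidHom.ker f)) := by
  refine ⟨fun i => ?_, fun i j hij => ?_, fun i => ?_⟩
  · rw [ker_pow_succ_eq_comap]
    exact ⟨comapQuotientKerHom (f ^ i) (AddMonoidHom.ker f),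
      comapQuotientKerHom_injective _ _, fun _ _ => rfl⟩
  · simp only [card_ker_pow_succ_quotient]
    exact AddSubgroup.card_le_of_le (AddSubgroup.comap_mono (antitone_range_pow f hij))
  · rw [card_ker_pow_succ_quotient]
    exact AddSubgroup.card_addSubgroup_dvd_card _

/-- For `M` a finite abelian group, `f : M → M` an additive endomorphism and
`Mᵢ = ker (fⁱ)`: for every `i`, `fⁱ` induces an injective group homomorphism
`M_{i+1}/Mᵢ → M₁ = ker f`; consequently `i ↦ #(M_{i+1}/Mᵢ)` is antitone and each
`#(M_{i+1}/Mᵢ)` divides `#M₁`. -/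
theorem stmt2 {M : Type*} [AddCommGroup M] [Finite M] (f : AddMonoid.End M) :
    (∀ i : ℕ, ∃ φ : (AddMonoidHom.ker (f ^ (i + 1)) ⧸
          (AddMonoidHom.ker (f ^ i)).addSubgroupOf (AddMonoidHom.ker (f ^ (i + 1)))) →+
        AddMonoidHom.ker f,
      Function.Injective φ ∧
      ∀ (x : AddMonoidHom.ker (f ^ (i + 1))) (h : (f ^ i) (x : M) ∈ AddMonoidHom.ker f),
        φ (QuotientAddGroup.mk x) = ⟨(f ^ i) (x : M), h⟩) ∧
    Antitone (fun i : ℕ => Nat.card (AddMonoidHom.ker (f ^ (i + 1)) ⧸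
      (AddMonoidHom.ker (f ^ i)).addSubgroupOf (AddMonoidHom.ker (f ^ (i + 1))))) ∧
    (∀ i : ℕ, Nat.card (AddMonoidHom.ker (f ^ (i + 1)) ⧸
        (AddMonoidHom.ker (f ^ i)).addSubgroupOf (AddMonoidHom.ker (f ^ (i + 1)))) ∣
      Nat.card (AddMonoidHom.ker f)) :=
  stmt2_general f
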